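/- There exist m₀, C ∈ ℕ such that for every m ≥ m₀ there exists a bipartite graph B on vertex classes Z and X ∪ Y with the following properties: (i) B has maximum degree at most 40 and every vertex in Z has degree at most 3; (ii) |Z| = Cm, |X| = (C−1)m and |Y| = 2m; (iii) B is Y-robust. -/

import Mathlib

/-- Predecessor in the fibres of `p`. -/
lemma exists_pred {I A : Type} [Fintype I] [LinearOrder I] (p : I → A) :
    ∃ pred : I → A ⊕ I, Function.Injective pred ∧
      (∀ j a, pred j = Sum.inl a → a = p j) ∧
      (∀ j k, pred j = Sum.inr k → p k = p j ∧ k < j) := by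
  classical
  let S : I → Finset I := fun j => Finset.univ.filter (fun k => k < j ∧ p k = p j)
  have hS : ∀ j k, k ∈ S j ↔ k < j ∧ p k = p j := by intro j k; simp [S]
  let pred : I → A ⊕ I := fun j =>
    if h : (S j).Nonempty then Sum.inr ((S j).max' h) else Sum.inl (p j)
  have h1 : ∀ j a, pred j = Sum.inl a → a = p j ∧ ¬ (S j).Nonempty := by
    intro j a h
    by_cases hn : (S j).Nonempty
    · simp [pred, hn] at h
    · simp only [pred, hn, dite_false, Sum.inl.injEq] at h
      exact ⟨h.symm, hn⟩
  have h2 : ∀ j k, pred j = Sum.inr k → k ∈ S j ∧ ∀ l ∈ S j, l ≤ k := by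
    intro j k h
    by_cases hn : (S j).Nonempty
    · simp only [pred, hn, dite_true, Sum.inr.injEq] at h
      subst h
      exact ⟨Finset.max'_mem _ _, fun l hl => Finset.le_max' _ _ hl⟩
    · simp [pred, hn] at h
  have key : ∀ j j', j < j' → pred j ≠ pred j' := by
    intro j j' hlt heq
    rcases hj : pred j with a | k
    · have ha := h1 j a hj
      have hb := h1 j' a (heq ▸ hj)
      exact hb.2 ⟨j, (hS _ _).2 ⟨hlt, ha.1.symm.trans hb.1⟩⟩
    · have ha := h2 j k hj
      have hb := h2 j' k (heq ▸ hj)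
      have hk := (hS _ _).1 ha.1
      have hk' := (hS _ _).1 hb.1
      have := hb.2 j ((hS _ _).2 ⟨hlt, hk.2.symm.trans hk'.2⟩)
      exact absurd hk.1 (not_lt.2 this)
  refine ⟨pred, ?_, fun j a h => (h1 j a h).1, fun j k h => ?_⟩
  · intro j j' h
    rcases lt_trichotomy j j' with hl | hl | hl
    · exact absurd h (key _ _ hl)
    · exact hl
    · exact absurd h.symm (key _ _ hl)
  · have := (hS _ _).1 (h2 j k h).1
    exact ⟨this.2, this.1⟩

lemma ncard_le_one_of {α : Type} {s : Set α} (h : ∀ a ∈ s, ∀ b ∈ s, a = b) : s.ncard ≤ 1 := by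
  rcases Set.eq_empty_or_nonempty s with rfl | ⟨a, ha⟩
  · simp
  · have : s = {a} := by
      ext b; constructor
      · intro hb; exact h b hb a ha
      · rintro rfl; exact ha
    rw [this]; simp

/-- Sparsification. -/
lemma sparsify {I Z₀ W₀ : Type} [Fintype I] [LinearOrder I] [Fintype Z₀] [Fintype W₀]
    (p : I → Z₀) (q : I → W₀) :
    ∃ R : Z₀ ⊕ (I ⊕ I) → W₀ ⊕ (I ⊕ I) → Prop,
      (∀ z, {w | R z w}.ncard ≤ 3) ∧ (∀ w, {z | R z w}.ncard ≤ 40) ∧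
      ∀ P : Set W₀, P.ncard = Fintype.card Z₀ →
        (∃ e : Z₀ → I, (∀ v, p (e v) = v) ∧ Function.Injective (q ∘ e) ∧ ∀ v, q (e v) ∈ P) →
        ∃ ξ : Z₀ ⊕ (I ⊕ I) → W₀ ⊕ (I ⊕ I), Function.Injective ξ ∧ (∀ z, R z (ξ z)) ∧
          ∀ w, w ∈ Set.range ξ ↔ ∀ a, w = Sum.inl a → a ∈ P := by
  classical
  obtain ⟨pz, pzi, pzl, pzr⟩ := exists_pred p
  obtain ⟨pw, pwi, pwl, pwr⟩ := exists_pred q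
  -- embeddings: z-type vertices sit in `inr (inl i)`, linking vertices in `inr (inr i)`
  let ι : ∀ {A : Type}, A ⊕ I → A ⊕ (I ⊕ I) := fun {A} => Sum.map id Sum.inl
  have ιi : ∀ {A : Type}, Function.Injective (ι (A := A)) := by
    intro A
    exact Function.Injective.sumMap Function.injective_id Sum.inl_injective
  let R1 : Z₀ ⊕ (I ⊕ I) → W₀ ⊕ (I ⊕ I) → Prop := fun z w =>
    ∃ i, z = Sum.inr (Sum.inl i) ∧ w = Sum.inr (Sum.inr i)
  let R2 : Z₀ ⊕ (I ⊕ I) → W₀ ⊕ (I ⊕ I) → Prop := fun z w =>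
    ∃ i, z = ι (pz i) ∧ w = Sum.inr (Sum.inr i)
  let R3 : Z₀ ⊕ (I ⊕ I) → W₀ ⊕ (I ⊕ I) → Prop := fun z w =>
    ∃ i, z = Sum.inr (Sum.inl i) ∧ w = Sum.inr (Sum.inl i)
  let R4 : Z₀ ⊕ (I ⊕ I) → W₀ ⊕ (I ⊕ I) → Prop := fun z w =>
    ∃ i, z = Sum.inr (Sum.inr i) ∧ w = Sum.inr (Sum.inl i)
  let R5 : Z₀ ⊕ (I ⊕ I) → W₀ ⊕ (I ⊕ I) → Prop := fun z w =>
    ∃ i, z = Sum.inr (Sum.inr i) ∧ w = ι (pw i)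
  refine ⟨fun z w => R1 z w ∨ R2 z w ∨ R3 z w ∨ R4 z w ∨ R5 z w, ?_, ?_, ?_⟩
  · intro z
    have a1 : {w | R1 z w ∨ R4 z w}.ncard ≤ 1 := by
      apply ncard_le_one_of
      rintro a (⟨i, h1, h2⟩ | ⟨i, h1, h2⟩) b (⟨j, h3, h4⟩ | ⟨j, h3, h4⟩) <;> subst h1 <;> simp_all
    have a2 : {w | R2 z w ∨ R5 z w}.ncard ≤ 1 := by
      apply ncard_le_one_of
      rintro a (⟨i, h1, h2⟩ | ⟨i, h1, h2⟩) b (⟨j, h3, h4⟩ | ⟨j, h3, h4⟩)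
      · have := pzi (ιi (h1.symm.trans h3)); subst this; rw [h2, h4]
      · exfalso
        have := h1.symm.trans h3
        rcases hx : pz i with x | x <;> rw [hx] at this <;> simp [ι] at this
      · exfalso
        have := h3.symm.trans h1
        rcases hx : pz j with x | x <;> rw [hx] at this <;> simp [ι] at this
      · have := h1.symm.trans h3
        simp only [Sum.inr.injEq] at this
        subst this; rw [h2, h4]
    have a3 : {w | R3 z w}.ncard ≤ 1 := by
      apply ncard_le_one_of
      rintro a ⟨i, h1, h2⟩ b ⟨j, h3, h4⟩
      subst h1; simp_all
    calc _ ≤ ({w | R1 z w ∨ R4 z w} ∪ {w | R2 z w ∨ R5 z w} ∪ {w | R3 z w}).ncard := by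
          apply Set.ncard_le_ncard _ (Set.toFinite _)
          intro w hw
          rcases hw with h | h | h | h | h
          · exact Or.inl (Or.inl (Or.inl h))
          · exact Or.inl (Or.inr (Or.inl h))
          · exact Or.inr h
          · exact Or.inl (Or.inl (Or.inr h))
          · exact Or.inl (Or.inr (Or.inr h))
      _ ≤ _ := Set.ncard_union_le _ _
      _ ≤ 1 + 1 + 1 := by
          have := Set.ncard_union_le {w | R1 z w ∨ R4 z w} {w | R2 z w ∨ R5 z w}
          omega
      _ = 3 := rfl
  · intro w
    have b1 : {z | R1 z w}.ncard ≤ 1 := by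
      apply ncard_le_one_of
      rintro a ⟨i, h1, h2⟩ b ⟨j, h3, h4⟩; subst h2; simp_all
    have b2 : {z | R2 z w}.ncard ≤ 1 := by
      apply ncard_le_one_of
      rintro a ⟨i, h1, h2⟩ b ⟨j, h3, h4⟩; subst h2; simp_all
    have b3 : {z | R3 z w}.ncard ≤ 1 := by
      apply ncard_le_one_of
      rintro a ⟨i, h1, h2⟩ b ⟨j, h3, h4⟩; subst h2; simp_all
    have b4 : {z | R4 z w}.ncard ≤ 1 := by
      apply ncard_le_one_of
      rintro a ⟨i, h1, h2⟩ b ⟨j, h3, h4⟩; subst h2; simp_all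
    have b5 : {z | R5 z w}.ncard ≤ 1 := by
      apply ncard_le_one_of
      rintro a ⟨i, h1, h2⟩ b ⟨j, h3, h4⟩
      have := pwi (ιi (h2.symm.trans h4)); subst this; rw [h1, h3]
    have c1 := Set.ncard_union_le {z | R1 z w} ({z | R2 z w} ∪ ({z | R3 z w} ∪ ({z | R4 z w} ∪ {z | R5 z w})))
    have c2 := Set.ncard_union_le {z | R2 z w} (({z | R3 z w} ∪ ({z | R4 z w} ∪ {z | R5 z w})))
    have c3 := Set.ncard_union_le {z | R3 z w} (({z | R4 z w} ∪ {z | R5 z w}))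
    have c4 := Set.ncard_union_le {z | R4 z w} {z | R5 z w}
    have : {z | R1 z w ∨ R2 z w ∨ R3 z w ∨ R4 z w ∨ R5 z w} =
      {z | R1 z w} ∪ ({z | R2 z w} ∪ ({z | R3 z w} ∪ ({z | R4 z w} ∪ {z | R5 z w}))) := rfl
    rw [this]
    omega
  · rintro P hP ⟨e, he, hqe, heP⟩
    have hqe' : ∀ v v', q (e v) = q (e v') → v = v' := fun v v' h => hqe h
    let α : Z₀ ⊕ (I ⊕ I) → Z₀ ⊕ (I ⊕ I) := fun k => match k with
      | Sum.inl v => Sum.inr (Sum.inl (e v))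
      | Sum.inr (Sum.inl i) => if i ≤ e (p i) then ι (pz i) else Sum.inr (Sum.inl i)
      | Sum.inr (Sum.inr i) => Sum.inr (Sum.inr i)
    let β : Z₀ ⊕ (I ⊕ I) → W₀ ⊕ (I ⊕ I) := fun k => match k with
      | Sum.inl v => Sum.inr (Sum.inl (e v))
      | Sum.inr (Sum.inl i) => Sum.inr (Sum.inr i)
      | Sum.inr (Sum.inr i) => if ∃ v, q (e v) = q i ∧ i ≤ e v then ι (pw i)
          else Sum.inr (Sum.inl i)
    have ιl : ∀ {A : Type} (x : A ⊕ I) (k : I), ι x = Sum.inr (Sum.inl k) → x = Sum.inr k := by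
      intro A x k h
      rcases x with x | x <;> simp [ι] at h
      rw [h]
    have ιr : ∀ {A : Type} (x : A ⊕ I) (k : I), ι x ≠ Sum.inr (Sum.inr k) := by
      intro A x k h
      rcases x with x | x <;> simp [ι] at h
    have αi : Function.Injective α := by
      have e1 : ∀ v i, α (Sum.inl v) ≠ α (Sum.inr (Sum.inl i)) := by
        intro v i h
        by_cases c : i ≤ e (p i)
        · simp only [α, c, if_true] at h
          have := pzr _ _ (ιl _ _ h.symm)
          rw [he] at this
          rw [← this.1] at c
          exact absurd this.2 (not_lt.2 c)
        · simp only [α, c, if_false, Sum.inr.injEq, Sum.inl.injEq] at h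
          apply c
          rw [← h, he]
      have e2 : ∀ v i, α (Sum.inl v) ≠ α (Sum.inr (Sum.inr i)) := by
        intro v i h; simp [α] at h
      have e3 : ∀ i j, α (Sum.inr (Sum.inl i)) ≠ α (Sum.inr (Sum.inr j)) := by
        intro i j h
        by_cases c : i ≤ e (p i)
        · simp only [α, c, if_true] at h
          exact ιr _ _ h
        · simp [α, c] at h
      have e4' : ∀ i j, i ≤ e (p i) → ¬ j ≤ e (p j) →
          α (Sum.inr (Sum.inl i)) ≠ α (Sum.inr (Sum.inl j)) := by
        intro i j c c' h
        simp only [α, c, c', if_true, if_false] at h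
        have := pzr _ _ (ιl _ _ h)
        rw [this.1] at c'
        exact c' (this.2.le.trans c)
      have e4 : ∀ i j, α (Sum.inr (Sum.inl i)) = α (Sum.inr (Sum.inl j)) → i = j := by
        intro i j h
        by_cases c : i ≤ e (p i) <;> by_cases c' : j ≤ e (p j)
        · simp only [α, c, c', if_true] at h
          exact pzi (ιi h)
        · exact absurd h (e4' _ _ c c')
        · exact absurd h.symm (e4' _ _ c' c)
        · simpa [α, c, c'] using h
      rintro (v | i | i) (v' | j | j) h
      · simp only [α, Sum.inr.injEq, Sum.inl.injEq] at h
        rw [← he v, h, he]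
      · exact absurd h (e1 _ _)
      · exact absurd h (e2 _ _)
      · exact absurd h.symm (e1 _ _)
      · rw [e4 _ _ h]
      · exact absurd h (e3 _ _)
      · exact absurd h.symm (e2 _ _)
      · exact absurd h.symm (e3 _ _)
      · simpa [α] using h
    have βi : Function.Injective β := by
      have e1 : ∀ v i, β (Sum.inl v) ≠ β (Sum.inr (Sum.inr i)) := by
        intro v i h
        by_cases c : ∃ v, q (e v) = q i ∧ i ≤ e v
        · simp only [β, c, if_true] at h
          have := pwr _ _ (ιl _ _ h.symm)
          obtain ⟨v', h1, h2⟩ := c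
          have := hqe' _ _ (h1.trans this.1.symm)
          subst this
          exact absurd h2 (not_le.2 (by tauto))
        · simp only [β, c, if_false, Sum.inr.injEq, Sum.inl.injEq] at h
          exact c ⟨v, by rw [h], by rw [h]⟩
      have e2 : ∀ v i, β (Sum.inl v) ≠ β (Sum.inr (Sum.inl i)) := by
        intro v i h; simp [β] at h
      have e3 : ∀ i j, β (Sum.inr (Sum.inr i)) ≠ β (Sum.inr (Sum.inl j)) := by
        intro i j h
        by_cases c : ∃ v, q (e v) = q i ∧ i ≤ e v
        · simp only [β, c, if_true] at h
          exact ιr _ _ h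
        · simp [β, c] at h
      have e4' : ∀ i j, (∃ v, q (e v) = q i ∧ i ≤ e v) → ¬ (∃ v, q (e v) = q j ∧ j ≤ e v) →
          β (Sum.inr (Sum.inr i)) ≠ β (Sum.inr (Sum.inr j)) := by
        intro i j c c' h
        simp only [β, c, c', if_true, if_false] at h
        have := pwr _ _ (ιl _ _ h)
        obtain ⟨v, h1, h2⟩ := c
        exact c' ⟨v, h1.trans this.1.symm, this.2.le.trans h2⟩
      have e4 : ∀ i j, β (Sum.inr (Sum.inr i)) = β (Sum.inr (Sum.inr j)) → i = j := by
        intro i j h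
        by_cases c : ∃ v, q (e v) = q i ∧ i ≤ e v <;>
          by_cases c' : ∃ v, q (e v) = q j ∧ j ≤ e v
        · simp only [β, c, c', if_true] at h
          exact pwi (ιi h)
        · exact absurd h (e4' _ _ c c')
        · exact absurd h.symm (e4' _ _ c' c)
        · simpa only [β, c, c', if_false, Sum.inr.injEq, Sum.inl.injEq] using h
      rintro (v | i | i) (v' | j | j) h
      · simp only [β, Sum.inr.injEq, Sum.inl.injEq] at h
        rw [← he v, h, he]
      · exact absurd h (e2 _ _)
      · exact absurd h (e1 _ _)
      · exact absurd h.symm (e2 _ _)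
      · simpa [β] using h
      · exact absurd h.symm (e3 _ _)
      · exact absurd h.symm (e1 _ _)
      · exact absurd h (e3 _ _)
      · rw [e4 _ _ h]
    have αb : Function.Bijective α := Finite.injective_iff_bijective.1 αi
    have hR : ∀ k, R1 (α k) (β k) ∨ R2 (α k) (β k) ∨ R3 (α k) (β k) ∨ R4 (α k) (β k) ∨
        R5 (α k) (β k) := by
      rintro (v | i | i)
      · right; right; left; exact ⟨e v, rfl, rfl⟩
      · by_cases c : i ≤ e (p i)
        · right; left; exact ⟨i, by simp [α, c], rfl⟩
        · left; exact ⟨i, by simp [α, c], rfl⟩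
      · by_cases c : ∃ v, q (e v) = q i ∧ i ≤ e v
        · right; right; right; right; exact ⟨i, rfl, by simp only [β, c, if_true]⟩
        · right; right; right; left; exact ⟨i, rfl, by simp only [β, c, if_false]⟩
    have hβP : ∀ k a, β k = Sum.inl a → a ∈ P := by
      rintro (v | i | i) a h
      · simp [β] at h
      · simp [β] at h
      · by_cases c : ∃ v, q (e v) = q i ∧ i ≤ e v
        · simp only [β, c, if_true] at h
          have h' : pw i = Sum.inl a := by
            rcases hx : pw i with x | x
            · rw [hx] at h; simpa [ι] using h
            · rw [hx] at h; simp [ι] at h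
          obtain ⟨v, h1, -⟩ := c
          rw [pwl _ _ h', ← h1]; exact heP v
        · simp [β, c] at h
    let αe := Equiv.ofBijective α αb
    refine ⟨β ∘ αe.symm, βi.comp αe.symm.injective, ?_, ?_⟩
    · intro z
      have := hR (αe.symm z)
      have h2 : α (αe.symm z) = z := αe.apply_symm_apply z
      rw [h2] at this
      exact this
    · have hr : Set.range (β ∘ αe.symm) = Set.range β := by
        rw [Set.range_comp, αe.symm.range_eq_univ, Set.image_univ]
      rw [hr]
      have hsub : Set.range β ⊆ Sum.inl '' P ∪ Set.range Sum.inr := by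
        rintro w ⟨k, rfl⟩
        rcases hk : β k with a | b
        · left; exact ⟨a, hβP k a hk, rfl⟩
        · right; exact ⟨b, rfl⟩
      have hcard : (Sum.inl '' P ∪ Set.range Sum.inr : Set (W₀ ⊕ (I ⊕ I))).ncard ≤ (Set.range β).ncard := by
        refine (Set.ncard_union_le _ _).trans ?_
        rw [Set.ncard_image_of_injective _ Sum.inl_injective, hP, ← Set.image_univ,
          Set.ncard_image_of_injective _ Sum.inr_injective, ← Set.image_univ,
          Set.ncard_image_of_injective _ βi, Set.ncard_univ, Set.ncard_univ]
        simp [Nat.card_eq_fintype_card]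
      have heq := Set.eq_of_subset_of_ncard_le hsub hcard (Set.toFinite _)
      rw [heq]
      rintro (a | b) <;> simp

/-- Termwise estimate. -/
lemma term_bound (m s : ℕ) (hm : 2 ≤ m) (hs : 2 * s ≤ 3 * m + 1) :
    (4 : ℝ) ^ s * ((4 * m).choose s * (2 * m).choose s * (s : ℝ) ^ (40 * s)) ≤
      (2 * m : ℝ) ^ (40 * s) := by
  have hss : (s : ℝ) ^ s ≤ 3 ^ s * s.factorial := by
    have h := Real.pow_div_factorial_le_exp (s : ℝ) (by positivity) s
    rw [div_le_iff₀ (by positivity)] at h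
    refine h.trans ?_
    gcongr
    rw [← Real.exp_one_pow]
    gcongr
    exact Real.exp_one_lt_three.le
  have hc : ∀ n : ℕ, (n.choose s : ℝ) * (s : ℝ) ^ s ≤ (3 * n) ^ s := by
    intro n
    have h1 : (n.choose s : ℝ) ≤ (n : ℝ) ^ s / s.factorial := Nat.choose_le_pow_div s n
    calc (n.choose s : ℝ) * (s : ℝ) ^ s ≤ (n : ℝ) ^ s / s.factorial * (3 ^ s * s.factorial) := by
          gcongr
      _ = (3 * n) ^ s := by rw [mul_pow]; field_simp
  have h1 := hc (4 * m)
  have h2 := hc (2 * m)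
  have hm' : (2 : ℝ) ≤ m := by exact_mod_cast hm
  have hs' : (2 : ℝ) * s ≤ 3 * m + 1 := by exact_mod_cast hs
  have h3 : (s : ℝ) ^ (38 * s) ≤ ((7 / 8 * (2 * m)) ^ 38) ^ s := by
    rw [← pow_mul]
    gcongr
    linarith
  push_cast at h1 h2
  calc (4 : ℝ) ^ s * ((4 * m).choose s * (2 * m).choose s * (s : ℝ) ^ (40 * s))
      = 4 ^ s * ((((4 * m).choose s) * (s : ℝ) ^ s) * (((2 * m).choose s) * (s : ℝ) ^ s) *
          (s : ℝ) ^ (38 * s)) := by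
        rw [show 40 * s = s + s + 38 * s by ring, pow_add, pow_add]; ring
    _ ≤ 4 ^ s * ((3 * (4 * m)) ^ s * (3 * (2 * m)) ^ s * ((7 / 8 * (2 * m)) ^ 38) ^ s) := by
        gcongr
    _ = (4 * (3 * (4 * m)  * (3 * (2 * m)) * (7 / 8 * (2 * m)) ^ 38)) ^ s := by
        simp only [mul_pow]
    _ ≤ ((2 * m : ℝ) ^ 40) ^ s := by
        gcongr
        have : (4 * (3 * (4 * m)  * (3 * (2 * m)) * (7 / 8 * (2 * m)) ^ 38) : ℝ) =
          (72 * (7 / 8) ^ 38) * (2 * m) ^ 40 := by ring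
        rw [this]
        have h4 : (72 * (7 / 8) ^ 38 : ℝ) ≤ 1 := by norm_num
        have h5 : (0 : ℝ) ≤ (2 * m) ^ 40 := by positivity
        nlinarith
    _ = _ := by rw [← pow_mul]

lemma count_maps (N M d : ℕ) (S : Finset (Fin N)) (T : Finset (Fin M)) :
    (Finset.univ.filter (fun f : Fin N → Fin d → Fin M => ∀ a ∈ S, ∀ j, f a j ∈ T)).card * 
      M ^ (d * S.card) = T.card ^ (d * S.card) * M ^ (d * N) := by
  classical
  have : (Finset.univ.filter (fun f : Fin N → Fin d → Fin M => ∀ a ∈ S, ∀ j, f a j ∈ T)) =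
      Fintype.piFinset (fun a => if a ∈ S then Fintype.piFinset (fun _ : Fin d => T)
        else Finset.univ) := by
    ext f
    simp only [Finset.mem_filter, Finset.mem_univ, true_and, Fintype.mem_piFinset]
    refine forall_congr' fun a => ?_
    by_cases h : a ∈ S <;> simp [h]
  rw [this, Fintype.card_piFinset]
  have h2 : ∀ a : Fin N, (if a ∈ S then Fintype.piFinset (fun _ : Fin d => T)
        else Finset.univ).card = if a ∈ S then T.card ^ d else M ^ d := by
    intro a
    by_cases h : a ∈ S <;> simp [h]
  simp only [h2]
  rw [Finset.prod_ite]
  simp only [Finset.prod_const]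
  have h3 : (Finset.univ.filter (fun a => a ∈ S)) = S := by simp
  have h4 : (Finset.univ.filter (fun a => a ∉ S)).card + S.card = N := by
    have := Finset.card_filter_add_card_filter_not (s := (Finset.univ : Finset (Fin N)))
      (fun a => a ∈ S)
    rw [h3, Finset.card_univ, Fintype.card_fin] at this
    omega
  rw [h3, ← pow_mul, ← pow_mul, mul_assoc, ← pow_add, ← mul_add, h4]

lemma exists_expander (m : ℕ) (hm : 2 ≤ m) :
    ∃ f : Fin (4 * m) → Fin 40 → Fin (2 * m), ∀ S : Finset (Fin (4 * m)),
      2 * S.card ≤ 3 * m + 1 →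
      S.card ≤ (S.biUnion (fun a => Finset.univ.image (f a))).card := by
  classical
  by_contra hcon
  push Not at hcon
  let K := Finset.Icc 1 ((3 * m + 1) / 2)
  have hsub : (Finset.univ : Finset (Fin (4 * m) → Fin 40 → Fin (2 * m))) ⊆
      K.biUnion fun s => (Finset.powersetCard s Finset.univ).biUnion fun S =>
        (Finset.powersetCard s Finset.univ).biUnion fun T =>
          Finset.univ.filter (fun f => ∀ a ∈ S, ∀ j, f a j ∈ T) := by
    intro f _
    obtain ⟨S, hS1, hS2⟩ := hcon f
    obtain ⟨T, hT1, hT2⟩ := Finset.exists_superset_card_eq hS2.le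
      (by rw [Fintype.card_fin]; omega)
    simp only [Finset.mem_biUnion, Finset.mem_powersetCard_univ, Finset.mem_filter,
      Finset.mem_univ, true_and]
    refine ⟨S.card, by simp only [K, Finset.mem_Icc]; omega, S, rfl, T, hT2, ?_⟩
    intro a ha j
    apply hT1
    simp only [Finset.mem_biUnion]
    exact ⟨a, ha, Finset.mem_image_of_mem _ (Finset.mem_univ _)⟩
  have h1 := Finset.card_le_card hsub
  have hcardtot : (Finset.univ : Finset (Fin (4 * m) → Fin 40 → Fin (2 * m))).card =
      (2 * m) ^ (40 * (4 * m)) := by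
    simp [← pow_mul]
  rw [hcardtot] at h1
  have hMpos : (0 : ℝ) < 2 * m := by
    have : (2 : ℝ) ≤ m := by exact_mod_cast hm
    linarith
  have hterm : ∀ s ∈ K, (((Finset.powersetCard s Finset.univ).biUnion fun S =>
        (Finset.powersetCard s Finset.univ).biUnion fun T =>
          Finset.univ.filter (fun f : Fin (4 * m) → Fin 40 → Fin (2 * m) =>
            ∀ a ∈ S, ∀ j, f a j ∈ T)).card : ℝ) ≤ (1 / 4) ^ s * (2 * m) ^ (40 * (4 * m)) := by
    intro s hs
    simp only [K, Finset.mem_Icc] at hs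
    have hle : ((Finset.powersetCard s Finset.univ).biUnion fun S =>
        (Finset.powersetCard s Finset.univ).biUnion fun T =>
          Finset.univ.filter (fun f : Fin (4 * m) → Fin 40 → Fin (2 * m) =>
            ∀ a ∈ S, ∀ j, f a j ∈ T)).card * (2 * m) ^ (40 * s) ≤
        (4 * m).choose s * ((2 * m).choose s * (s ^ (40 * s) * (2 * m) ^ (40 * (4 * m)))) := by
      refine (Nat.mul_le_mul_right _ Finset.card_biUnion_le).trans ?_
      rw [Finset.sum_mul]
      refine (Finset.sum_le_card_nsmul _ _
        ((2 * m).choose s * (s ^ (40 * s) * (2 * m) ^ (40 * (4 * m)))) ?_).trans_eq ?_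
      · intro S hS
        refine (Nat.mul_le_mul_right _ Finset.card_biUnion_le).trans ?_
        rw [Finset.sum_mul]
        refine (Finset.sum_le_card_nsmul _ _
          (s ^ (40 * s) * (2 * m) ^ (40 * (4 * m))) ?_).trans_eq ?_
        · intro T hT
          have := count_maps (4 * m) (2 * m) 40 S T
          rw [Finset.mem_powersetCard_univ] at hS hT
          rw [hS, hT] at this
          exact this.le
        · rw [Finset.card_powersetCard, Finset.card_univ, Fintype.card_fin, smul_eq_mul]
      · rw [Finset.card_powersetCard, Finset.card_univ, Fintype.card_fin, smul_eq_mul]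
    generalize ((Finset.powersetCard s Finset.univ).biUnion fun S =>
        (Finset.powersetCard s Finset.univ).biUnion fun T =>
          Finset.univ.filter (fun f : Fin (4 * m) → Fin 40 → Fin (2 * m) =>
            ∀ a ∈ S, ∀ j, f a j ∈ T)).card = c at hle ⊢
    have hb := term_bound m s hm (by omega)
    have hle' : (c : ℝ) * (2 * m) ^ (40 * s) ≤
        (4 * m).choose s * ((2 * m).choose s * ((s : ℝ) ^ (40 * s) * (2 * m) ^ (40 * (4 * m)))) := by
      exact_mod_cast hle
    have hp : (0 : ℝ) < (2 * m) ^ (40 * s) := by positivity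
    have hp4 : (0 : ℝ) < 4 ^ s := by positivity
    rw [one_div, inv_pow, inv_mul_eq_div, le_div_iff₀ hp4]
    refine le_of_mul_le_mul_right ?_ hp
    calc (c : ℝ) * 4 ^ s * (2 * m) ^ (40 * s) = 4 ^ s * (c * (2 * m) ^ (40 * s)) := by ring
      _ ≤ 4 ^ s * ((4 * m).choose s * ((2 * m).choose s *
            ((s : ℝ) ^ (40 * s) * (2 * m) ^ (40 * (4 * m))))) := by gcongr
      _ = (2 * m) ^ (40 * (4 * m)) *
            (4 ^ s * ((4 * m).choose s * (2 * m).choose s * (s : ℝ) ^ (40 * s))) := by ring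
      _ ≤ (2 * m) ^ (40 * (4 * m)) * (2 * m) ^ (40 * s) := by gcongr
  have h2 : ((2 * m : ℝ)) ^ (40 * (4 * m)) ≤ ∑ s ∈ K, (1 / 4 : ℝ) ^ s * (2 * m) ^ (40 * (4 * m)) := by
    have h3 := h1.trans Finset.card_biUnion_le
    have h4 := (Nat.cast_le (α := ℝ)).2 h3
    push_cast at h4
    refine h4.trans ?_
    exact Finset.sum_le_sum hterm
  rw [← Finset.sum_mul] at h2
  have hP : (0 : ℝ) < (2 * m) ^ (40 * (4 * m)) := by positivity
  have h5 : ∑ s ∈ K, (1 / 4 : ℝ) ^ s ≤ 1 / 3 := by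
    have : ∀ n : ℕ, ∑ s ∈ Finset.Icc 1 n, (1 / 4 : ℝ) ^ s ≤ 1 / 3 - 1 / 3 * (1 / 4) ^ n := by
      intro n
      induction n with
      | zero => simp
      | succ n ih =>
        rw [Finset.sum_Icc_succ_top (by omega), pow_succ]
        linarith
    refine (this _).trans ?_
    have : (0 : ℝ) ≤ 1 / 3 * (1 / 4) ^ ((3 * m + 1) / 2) := by positivity
    linarith
  nlinarith

/-- Dense robust graph with linearly many edges. -/
lemma exists_linear_robust (m : ℕ) (hm : 2 ≤ m) :
    ∃ (p : Fin (280 * m) → Fin (3 * m)) (q : Fin (280 * m) → Fin (2 * m) ⊕ Fin (2 * m)),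
      ∀ Y' : Finset (Fin (2 * m)), Y'.card = m →
        ∃ e : Fin (3 * m) → Fin (280 * m), (∀ v, p (e v) = v) ∧ Function.Injective (q ∘ e) ∧
          ∀ v, q (e v) ∈ (Set.range Sum.inl ∪ Sum.inr '' (Y' : Set (Fin (2 * m))) :
            Set (Fin (2 * m) ⊕ Fin (2 * m))) := by
  classical
  obtain ⟨f, hf⟩ := exists_expander m hm
  let I := (Fin (3 * m) × Fin 40) ⊕ ((Fin (2 * m) ⊕ Fin (2 * m)) × Fin 40)
  have hI : Fintype.card I = 280 * m := by simp [I]; ring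
  let φ : Fin (280 * m) ≃ I := (finCongr hI.symm).trans (Fintype.equivFin I).symm
  let c1 : Fin (3 * m) → Fin (4 * m) := Fin.castLE (by omega)
  have c1i : Function.Injective c1 := Fin.castLE_injective _
  let c2 : Fin (2 * m) → Fin (3 * m) := Fin.castLE (by omega)
  have c2i : Function.Injective c2 := Fin.castLE_injective _
  let c3 : Fin (2 * m) ⊕ Fin (2 * m) ≃ Fin (4 * m) :=
    finSumFinEquiv.trans (finCongr (by ring))
  let p : I → Fin (3 * m) := Sum.elim (fun x => x.1) (fun x => c2 (f (c3 x.1) x.2))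
  let q : I → Fin (2 * m) ⊕ Fin (2 * m) := Sum.elim (fun x => Sum.inl (f (c1 x.1) x.2)) (fun x => x.1)
  refine ⟨p ∘ φ, q ∘ φ, fun Y' hY' => ?_⟩
  suffices h : ∃ e : Fin (3 * m) → I, (∀ v, p (e v) = v) ∧ Function.Injective (q ∘ e) ∧
          ∀ v, q (e v) ∈ (Set.range Sum.inl ∪ Sum.inr '' (Y' : Set (Fin (2 * m))) :
            Set (Fin (2 * m) ⊕ Fin (2 * m))) by
    obtain ⟨e, h1, h2, h3⟩ := h
    refine ⟨φ.symm ∘ e, by simpa using h1, ?_, by simpa using h3⟩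
    have : (q ∘ φ) ∘ (φ.symm ∘ e) = q ∘ e := by ext1 x; simp
    rw [this]; exact h2
  let P : Finset (Fin (2 * m) ⊕ Fin (2 * m)) := Finset.univ.disjSum Y'
  have hPc : P.card = 3 * m := by simp [P, hY']; omega
  let t : Fin (3 * m) → Finset (Fin (2 * m) ⊕ Fin (2 * m)) := fun v =>
    P.filter (fun w => ∃ i, p i = v ∧ q i = w)
  have hall : ∀ A : Finset (Fin (3 * m)), A.card ≤ (A.biUnion t).card := by
    intro A
    by_cases hA : 2 * A.card ≤ 3 * m + 1
    · have h1 := hf (A.image c1) (by rwa [Finset.card_image_of_injective _ c1i])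
      rw [Finset.card_image_of_injective _ c1i] at h1
      refine h1.trans ?_
      rw [← Finset.card_image_of_injective (f := (Sum.inl : Fin (2 * m) → Fin (2 * m) ⊕ Fin (2 * m)))
        _ Sum.inl_injective]
      apply Finset.card_le_card
      intro w hw
      simp only [Finset.mem_image, Finset.mem_biUnion, Finset.mem_univ, true_and] at hw
      obtain ⟨_, ⟨_, ⟨v, hv, rfl⟩, j, rfl⟩, rfl⟩ := hw
      simp only [Finset.mem_biUnion, t, Finset.mem_filter]
      exact ⟨v, hv, by simp [P], Sum.inl (v, j), rfl, rfl⟩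
    · by_contra hlt
      push Not at hlt
      have hAle : A.card ≤ 3 * m := by simpa using Finset.card_le_univ A
      have hsub : A.biUnion t ⊆ P := by
        intro w hw
        simp only [Finset.mem_biUnion, t, Finset.mem_filter] at hw
        obtain ⟨_, _, h, _⟩ := hw
        exact h
      have hB : 3 * m - A.card + 1 ≤ (P \ A.biUnion t).card := by
        rw [Finset.card_sdiff_of_subset hsub, hPc]; omega
      obtain ⟨B, hB1, hB2⟩ := Finset.exists_subset_card_eq hB
      have h1 := hf (B.image c3) (by
        rw [Finset.card_image_of_injective _ c3.injective]; omega)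
      rw [Finset.card_image_of_injective _ c3.injective,
        ← Finset.card_image_of_injective _ c2i] at h1
      have h2 : Finset.image c2 ((B.image c3).biUnion fun a => Finset.univ.image (f a)) ⊆ Aᶜ := by
        intro v hv
        simp only [Finset.mem_image, Finset.mem_biUnion, Finset.mem_univ, true_and] at hv
        obtain ⟨_, ⟨_, ⟨w, hw, rfl⟩, j, rfl⟩, rfl⟩ := hv
        rw [Finset.mem_compl]
        intro hvA
        have hw' := hB1 hw
        rw [Finset.mem_sdiff] at hw'
        apply hw'.2
        simp only [Finset.mem_biUnion, t, Finset.mem_filter]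
        exact ⟨_, hvA, hw'.1, Sum.inr (w, j), rfl, rfl⟩
      have h3 := Finset.card_le_card h2
      rw [Finset.card_compl, Fintype.card_fin] at h3
      omega
  obtain ⟨g, hg1, hg2⟩ := (Finset.all_card_le_biUnion_card_iff_exists_injective t).1 hall
  have hg3 : ∀ v, g v ∈ P ∧ ∃ i, p i = v ∧ q i = g v := fun v => by
    simpa [t] using hg2 v
  choose hgP e he1 he2 using hg3
  refine ⟨e, he1, ?_, ?_⟩
  · have : q ∘ e = g := funext he2
    rw [this]; exact hg1
  · intro v
    rw [he2]
    have := hgP v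
    rcases hgv : g v with a | b
    · left; exact ⟨a, rfl⟩
    · right
      rw [hgv] at this
      exact ⟨b, by simpa [P] using this, rfl⟩


/-- **Lemma 5.4 (sparse robust bipartite graphs).**
There are `m₀, C ∈ ℕ` such that for every `m ≥ m₀` there is a bipartite graph `B` on
vertex classes `Z` and `X ∪ Y` (here `Z = Fin (C·m)`, `X = Fin ((C−1)·m)`, `Y = Fin (2m)`,
and `B` is given by the adjacency relation `R` between the two classes) such that every
vertex of `Z` has degree at most `3`, every vertex of `X ∪ Y` has degree at most `40`
(so `Δ(B) ≤ 40`), and `B` is `Y`-robust: for every `Y' ⊆ Y` of size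
`|Z| − |X| = m` there is a perfect matching between `Z` and `X ∪ Y'`. -/
theorem exists_sparse_robust_bipartite :
    ∃ m₀ C : ℕ, 0 < C ∧ ∀ m : ℕ, m₀ ≤ m →
      ∃ R : Fin (C * m) → Fin ((C - 1) * m) ⊕ Fin (2 * m) → Prop,
        (∀ z, {w | R z w}.ncard ≤ 3) ∧
        (∀ w, {z | R z w}.ncard ≤ 40) ∧
        ∀ Y' : Finset (Fin (2 * m)), Y'.card = m →
          ∃ ξ : Fin (C * m) → Fin ((C - 1) * m) ⊕ Fin (2 * m),
            Function.Injective ξ ∧ (∀ z, R z (ξ z)) ∧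
            Set.range ξ = Set.range Sum.inl ∪ (Sum.inr '' ↑Y') := by

  classical
  refine ⟨2, 563, by norm_num, fun m hm => ?_⟩
  obtain ⟨p, q, hpq⟩ := exists_linear_robust m hm
  obtain ⟨R, hR1, hR2, hR3⟩ := sparsify p q
  let I := Fin (280 * m)
  let ez : Fin (563 * m) ≃ Fin (3 * m) ⊕ (I ⊕ I) :=
    Fintype.equivOfCardEq (by simp [I]; ring)
  let ex : Fin ((563 - 1) * m) ≃ Fin (2 * m) ⊕ (I ⊕ I) :=
    Fintype.equivOfCardEq (by simp [I]; ring)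
  -- move the summand `Y` to the right
  let σ : (Fin (2 * m) ⊕ (I ⊕ I)) ⊕ Fin (2 * m) ≃ (Fin (2 * m) ⊕ Fin (2 * m)) ⊕ (I ⊕ I) :=
    { toFun := fun w => match w with
        | Sum.inl (Sum.inl a) => Sum.inl (Sum.inl a)
        | Sum.inl (Sum.inr b) => Sum.inr b
        | Sum.inr y => Sum.inl (Sum.inr y)
      invFun := fun w => match w with
        | Sum.inl (Sum.inl a) => Sum.inl (Sum.inl a)
        | Sum.inr b => Sum.inl (Sum.inr b)
        | Sum.inl (Sum.inr y) => Sum.inr y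
      left_inv := by rintro ((a | b) | y) <;> rfl
      right_inv := by rintro ((a | b) | y) <;> rfl }
  let ew : Fin ((563 - 1) * m) ⊕ Fin (2 * m) ≃ (Fin (2 * m) ⊕ Fin (2 * m)) ⊕ (I ⊕ I) :=
    (Equiv.sumCongr ex (Equiv.refl _)).trans σ
  refine ⟨fun z w => R (ez z) (ew w), ?_, ?_, ?_⟩
  · intro z
    have : {w | R (ez z) (ew w)} = ew ⁻¹' {w | R (ez z) w} := rfl
    rw [this, ← Equiv.image_symm_eq_preimage, Set.ncard_image_of_injective _ ew.symm.injective]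
    exact hR1 _
  · intro w
    have : {z | R (ez z) (ew w)} = ez ⁻¹' {z | R z (ew w)} := rfl
    rw [this, ← Equiv.image_symm_eq_preimage, Set.ncard_image_of_injective _ ez.symm.injective]
    exact hR2 _
  · intro Y' hY'
    obtain ⟨ξ, hξ1, hξ2, hξ3⟩ := hR3 (Set.range Sum.inl ∪ Sum.inr '' (Y' : Set (Fin (2 * m))))
      (by
        have : (Set.range Sum.inl ∪ Sum.inr '' (Y' : Set (Fin (2 * m))) :
            Set (Fin (2 * m) ⊕ Fin (2 * m))) =
            ((Finset.univ.disjSum Y' : Finset (Fin (2 * m) ⊕ Fin (2 * m))) : Set _) := by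
          ext (a | b) <;> simp
        rw [this, Set.ncard_coe_finset]
        simp [hY']; omega)
      (hpq Y' hY')
    refine ⟨ew.symm ∘ ξ ∘ ez, ew.symm.injective.comp (hξ1.comp ez.injective), ?_, ?_⟩
    · intro z
      simpa using hξ2 (ez z)
    · ext w
      have h1 : w ∈ Set.range (ew.symm ∘ ξ ∘ ez) ↔ ew w ∈ Set.range ξ := by
        constructor
        · rintro ⟨z, rfl⟩
          exact ⟨ez z, by simp⟩
        · rintro ⟨z, hz⟩
          exact ⟨ez.symm z, by simp [hz]⟩
      rw [h1, hξ3]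
      rcases w with x | y
      · simp only [Set.mem_union, Set.mem_range_self, true_or, iff_true]
        intro a ha
        have hew : ew (Sum.inl x) = σ (Sum.inl (ex x)) := rfl
        rw [hew] at ha
        rcases hx : ex x with b | b
        · rw [hx] at ha
          simp only [σ, Equiv.coe_fn_mk, Sum.inl.injEq] at ha
          left; exact ⟨b, ha⟩
        · rw [hx] at ha
          simp [σ] at ha
      · have hew : ew (Sum.inr y) = Sum.inl (Sum.inr y) := rfl
        rw [hew]
        simp
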